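/- Let f be a measurable real-valued function on (−1,1) with ∫_{−1}^{1} f(x)²·√(1−x²) dx < ∞, and define its second-kind Chebyshev coefficients by b̂ₙ = (2/π)∫_{−1}^{1} f(x)·Uₙ(x)·√(1−x²) dx for n ≥ 0. Then the following are equivalent: (i) for every natural number s, Σ_{n=0}^{∞} (1+(n+1)²)^s·b̂ₙ² < ∞; (ii) there exists an infinitely differentiable function g : ℝ → ℝ such that f = g almost everywhere on (−1,1). (This is the identification U^∞ = C^∞([−1,1]).) -/

import Mathlib

open Real Set MeasureTheory

/-- The `n`-th Chebyshev polynomial of the second kind, as a real function. -/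
noncomputable def chebU (n : ℕ) : ℝ → ℝ := fun x => (Polynomial.Chebyshev.U ℝ n).eval x

/-- The second-kind Fourier–Chebyshev coefficients of a function on `(-1,1)`. -/
noncomputable def fourierChebU (f : ℝ → ℝ) : ℕ → ℝ := fun n =>
  (2 / π) * ∫ x in Ioo (-1 : ℝ) 1, f x * chebU n x * Real.sqrt (1 - x ^ 2)

/-!
Under `x = cos θ` the coefficients of `g` become the sine coefficients of `g (cos θ) * sin θ`, and
the operator `2g - (1 - x²)g'' + 3xg'` becomes `1 - d²/dθ²`; for smooth `g`, applying it multiplies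
the `n`-th coefficient by `1 + (n + 1)²`, so the coefficients decay faster than any power of `n`.

Conversely, let `bₙ` be rapidly decaying. If `|x| ≤ 1 + 1 / (2(n + 1)²) ≤ cosh (1 / (n + 1))`, then
`|Tₘ x| ≤ cosh 1` for all `m ≤ n`, and since `T'ₘ = m Uₘ₋₁` while `Uₘ` is a sum of the `Tⱼ`, all
derivatives of `Uₙ` are there of polynomial size in `n`. Cutting `Uₙ` off at the scale `(n + 1)⁻²`
outside `[-1, 1]` turns `∑ bₙ Uₙ` into a series of smooth functions on `ℝ` which may be
differentiated termwise. Its sum has the coefficients `bₙ`, and an integrable function orthogonal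
to all polynomials vanishes almost everywhere.
-/

open Asymptotics Filter Topology
open scoped NNReal
open Polynomial (derivative)
open Polynomial.Chebyshev (T U)

/-! ### Rapidly decaying sequences -/

lemma summable_of_superpolynomialDecay {b : ℕ → ℝ}
    (hb : SuperpolynomialDecay atTop (fun n : ℕ => (n : ℝ)) b) : Summable b := by
  have hO := (superpolynomialDecay_iff_isBigO b tendsto_natCast_atTop_atTop).1 hb (-2)
  exact summable_of_isBigO_nat (g := fun n : ℕ => (n : ℝ) ^ (-2 : ℤ))
    (by simp) hO

lemma summable_abs_mul_pow_of_superpolynomialDecay {b : ℕ → ℝ}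
    (hb : SuperpolynomialDecay atTop (fun n : ℕ => (n : ℝ)) b) (p : ℕ) :
    Summable fun n => |b n| * ((n : ℝ) + 1) ^ p := by
  have h := summable_of_superpolynomialDecay (hb.polynomial_mul ((Polynomial.X + 1) ^ p))
  refine h.abs.congr fun n => ?_
  simp [abs_mul, abs_of_nonneg (by positivity : (0 : ℝ) ≤ n + 1), mul_comm]

lemma superpolynomialDecay_iff_forall_summable {b : ℕ → ℝ} :
    SuperpolynomialDecay atTop (fun n : ℕ => (n : ℝ)) b ↔
      ∀ s : ℕ, Summable fun n : ℕ => (1 + ((n : ℝ) + 1) ^ 2) ^ s * b n ^ 2 := by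
  constructor
  · intro hb s
    have hsq := (hb.mul hb).polynomial_mul ((1 + (Polynomial.X + 1) ^ 2) ^ s)
    simpa [sq] using summable_of_superpolynomialDecay hsq
  · intro hb p
    have hsq : Tendsto (fun n : ℕ => ((n : ℝ) ^ p * b n) ^ 2) atTop (𝓝 0) := by
      refine squeeze_zero (fun n => sq_nonneg _) (fun n => ?_) (hb p).tendsto_atTop_zero
      rw [mul_pow, pow_right_comm]
      gcongr
      nlinarith [n.cast_nonneg (α := ℝ)]
    rw [tendsto_zero_iff_abs_tendsto_zero]
    simpa [Function.comp_def, sqrt_sq_eq_abs] using hsq.sqrt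

/-! ### Families with polynomially bounded derivatives -/

section PolyBoundedDerivs

variable {E F A : Type*} [NormedAddCommGroup E] [NormedSpace ℝ E]
  [NormedAddCommGroup F] [NormedSpace ℝ F] [NormedRing A] [NormedAlgebra ℝ A]

/-- Each derivative of `f n` is bounded on `S n` by a polynomial in `n`. This is what makes a series
`∑ bₙ fₙ` with rapidly decaying coefficients termwise differentiable to all orders. -/
def PolyBoundedDerivsOn (S : ℕ → Set E) (f : ℕ → E → F) : Prop :=
  ∀ k : ℕ, ∃ C : ℝ≥0, ∃ p : ℕ, ∀ n, ∀ x ∈ S n,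
    ‖iteratedFDeriv ℝ k (f n) x‖ ≤ C * ((n : ℝ) + 1) ^ p

namespace PolyBoundedDerivsOn

variable {S : ℕ → Set E}

lemma mono {S' : ℕ → Set E} {f : ℕ → E → F} (hf : PolyBoundedDerivsOn S f)
    (hS : ∀ n, S' n ⊆ S n) : PolyBoundedDerivsOn S' f := fun k =>
  let ⟨C, p, hC⟩ := hf k
  ⟨C, p, fun n x hx => hC n x (hS n hx)⟩

lemma exists_forall_le {f : ℕ → E → F} (hf : PolyBoundedDerivsOn S f) (k : ℕ) :
    ∃ C : ℝ≥0, ∃ p : ℕ, ∀ j ≤ k, ∀ n, ∀ x ∈ S n,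
      ‖iteratedFDeriv ℝ j (f n) x‖ ≤ C * ((n : ℝ) + 1) ^ p := by
  choose C p hC using hf
  refine ⟨(Finset.range (k + 1)).sup C, (Finset.range (k + 1)).sup p, fun j hj n x hx => ?_⟩
  have hmem : j ∈ Finset.range (k + 1) := Finset.mem_range_succ_iff.2 hj
  refine (hC j n x hx).trans ?_
  gcongr
  · exact Finset.le_sup hmem
  · simp
  · exact Finset.le_sup hmem

lemma mul {f g : ℕ → E → A} (hf : PolyBoundedDerivsOn S f) (hg : PolyBoundedDerivsOn S g)
    (hf_smooth : ∀ n, ContDiff ℝ (⊤ : ℕ∞) (f n)) (hg_smooth : ∀ n, ContDiff ℝ (⊤ : ℕ∞) (g n)) :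
    PolyBoundedDerivsOn S fun n x => f n x * g n x := by
  intro k
  obtain ⟨C, p, hC⟩ := hf.exists_forall_le k
  obtain ⟨D, q, hD⟩ := hg.exists_forall_le k
  refine ⟨2 ^ k * (C * D), p + q, fun n x hx => ?_⟩
  calc ‖iteratedFDeriv ℝ k (fun y => f n y * g n y) x‖
      ≤ ∑ i ∈ Finset.range (k + 1), (k.choose i : ℝ) * ‖iteratedFDeriv ℝ i (f n) x‖ *
          ‖iteratedFDeriv ℝ (k - i) (g n) x‖ :=
        norm_iteratedFDeriv_mul_le (hf_smooth n) (hg_smooth n) x (mod_cast le_top)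
    _ ≤ ∑ i ∈ Finset.range (k + 1), (k.choose i : ℝ) * (C * ((n : ℝ) + 1) ^ p) *
          (D * ((n : ℝ) + 1) ^ q) := by
        gcongr with i hi
        · exact hC i (Finset.mem_range_succ_iff.1 hi) n x hx
        · exact hD (k - i) (Nat.sub_le k i) n x hx
    _ = ((2 ^ k * (C * D) : ℝ≥0) : ℝ) * ((n : ℝ) + 1) ^ (p + q) := by
        rw [← Finset.sum_mul, ← Finset.sum_mul, ← Nat.cast_sum, Nat.sum_range_choose]
        push_cast
        ring

lemma of_eq_zero {f : ℕ → E → F} (hf : PolyBoundedDerivsOn S f) (hS : ∀ n, IsClosed (S n))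
    (hf_zero : ∀ n, ∀ x ∉ S n, f n x = 0) : PolyBoundedDerivsOn (fun _ => univ) f := by
  intro k
  obtain ⟨C, p, hC⟩ := hf k
  refine ⟨C, p, fun n x _ => ?_⟩
  by_cases hx : x ∈ S n
  · exact hC n x hx
  · have hloc : f n =ᶠ[𝓝 x] 0 := by
      filter_upwards [(hS n).isOpen_compl.mem_nhds hx] with y hy using hf_zero n y hy
    rw [(hloc.iteratedFDeriv ℝ k).eq_of_nhds, iteratedFDeriv_zero, Pi.zero_apply, norm_zero]
    positivity

lemma contDiff_tsum_smul [CompleteSpace F] {f : ℕ → E → F}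
    (hf : PolyBoundedDerivsOn (fun _ => univ) f)
    (hf_smooth : ∀ n, ContDiff ℝ (⊤ : ℕ∞) (f n)) {b : ℕ → ℝ}
    (hb : SuperpolynomialDecay atTop (fun n : ℕ => (n : ℝ)) b) :
    ContDiff ℝ (⊤ : ℕ∞) fun x => ∑' n, b n • f n x := by
  choose C p hC using hf
  refine contDiff_tsum (v := fun k n => C k * (|b n| * ((n : ℝ) + 1) ^ p k))
    (fun n => (hf_smooth n).const_smul (b n))
    (fun k _ => (summable_abs_mul_pow_of_superpolynomialDecay hb (p k)).mul_left _)
    fun k n x hk => ?_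
  calc ‖iteratedFDeriv ℝ k (fun y => b n • f n y) x‖
      = |b n| * ‖iteratedFDeriv ℝ k (f n) x‖ := by
        rw [iteratedFDeriv_const_smul_apply' ((hf_smooth n).of_le (mod_cast hk)).contDiffAt,
          norm_smul, norm_eq_abs]
    _ ≤ |b n| * (C k * ((n : ℝ) + 1) ^ p k) := by gcongr; exact hC k n x (mem_univ x)
    _ = C k * (|b n| * ((n : ℝ) + 1) ^ p k) := by ring

end PolyBoundedDerivsOn

lemma polyBoundedDerivsOn_comp_affine {φ : ℝ → ℝ} (hφ : ContDiff ℝ (⊤ : ℕ∞) φ)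
    (hφ_bdd : ∀ k, ∃ C : ℝ, ∀ x, |iteratedDeriv k φ x| ≤ C) {c d : ℕ → ℝ} {K : ℝ≥0} {q : ℕ}
    (hc : ∀ n, |c n| ≤ K * ((n : ℝ) + 1) ^ q) :
    PolyBoundedDerivsOn (fun _ => univ) fun n x => φ (c n * x + d n) := by
  intro k
  obtain ⟨C, hC⟩ := hφ_bdd k
  lift C to ℝ≥0 using (abs_nonneg _).trans (hC 0)
  refine ⟨K ^ k * C, q * k, fun n x _ => ?_⟩
  have hderiv : iteratedDeriv k (fun y => φ (c n * y + d n)) x =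
      c n ^ k * iteratedDeriv k φ (c n * x + d n) := by
    have hshift : ContDiff ℝ k fun y => φ (y + d n) :=
      (hφ.of_le (mod_cast le_top)).comp (by fun_prop)
    rw [congrFun (iteratedDeriv_comp_const_mul hshift (c n)) x, iteratedDeriv_comp_add_const]
  calc ‖iteratedFDeriv ℝ k (fun y => φ (c n * y + d n)) x‖
      = |c n| ^ k * |iteratedDeriv k φ (c n * x + d n)| := by
        rw [norm_iteratedFDeriv_eq_norm_iteratedDeriv, hderiv, norm_eq_abs, abs_mul, abs_pow]
    _ ≤ (K * ((n : ℝ) + 1) ^ q) ^ k * C := by gcongr; exacts [hc n, hC _]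
    _ = ((K ^ k * C : ℝ≥0) : ℝ) * ((n : ℝ) + 1) ^ (q * k) := by push_cast; ring

end PolyBoundedDerivs

/-! ### Smooth cutoffs of intervals -/

lemma exists_abs_iteratedDeriv_smoothTransition_le (k : ℕ) :
    ∃ C : ℝ, ∀ x, |iteratedDeriv k smoothTransition x| ≤ C := by
  cases k with
  | zero =>
    exact ⟨1, fun x => by
      simpa [abs_of_nonneg (smoothTransition.nonneg x)] using smoothTransition.le_one x⟩
  | succ k =>
    have hsupp : HasCompactSupport (deriv smoothTransition) := by
      refine HasCompactSupport.intro (isCompact_Icc (a := 0) (b := 1)) fun x hx => ?_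
      rcases lt_or_ge x 0 with hx0 | hx0
      · have hloc : smoothTransition =ᶠ[𝓝 x] fun _ => 0 := by
          filter_upwards [Iio_mem_nhds hx0] with y hy using smoothTransition.zero_of_nonpos hy.le
        rw [hloc.deriv_eq, deriv_const]
      · have hloc : smoothTransition =ᶠ[𝓝 x] fun _ => 1 := by
          filter_upwards [Ioi_mem_nhds (lt_of_not_ge fun hx1 => hx ⟨hx0, hx1⟩)] with y hy
          exact smoothTransition.one_of_one_le (le_of_lt hy)
        rw [hloc.deriv_eq, deriv_const]
    have hcont : Continuous (iteratedFDeriv ℝ k (deriv smoothTransition)) :=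
      (contDiff_infty_iff_deriv.1 smoothTransition.contDiff).2.continuous_iteratedFDeriv
        (mod_cast le_top)
    obtain ⟨C, hC⟩ := (hsupp.iteratedFDeriv k).exists_bound_of_continuous hcont
    refine ⟨C, fun x => ?_⟩
    rw [iteratedDeriv_succ', ← norm_eq_abs, ← norm_iteratedFDeriv_eq_norm_iteratedDeriv]
    exact hC x

/-- A smooth cutoff of the interval `[a, b]`, where `c` is the inverse width of the transition
zones. -/
noncomputable def smoothCutoff (a b c x : ℝ) : ℝ :=
  smoothTransition (c * x + (1 - c * a)) * smoothTransition (-c * x + (1 + c * b))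

lemma contDiff_smoothCutoff (a b c : ℝ) : ContDiff ℝ (⊤ : ℕ∞) (smoothCutoff a b c) :=
  (smoothTransition.contDiff.comp (by fun_prop)).mul (smoothTransition.contDiff.comp (by fun_prop))

lemma smoothCutoff_eq_one {a b c x : ℝ} (hc : 0 ≤ c) (hx : x ∈ Icc a b) :
    smoothCutoff a b c x = 1 := by
  have hleft := mul_nonneg hc (sub_nonneg.2 hx.1)
  have hright := mul_nonneg hc (sub_nonneg.2 hx.2)
  rw [smoothCutoff, smoothTransition.one_of_one_le (by linarith),
    smoothTransition.one_of_one_le (by linarith), mul_one]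

lemma smoothCutoff_eq_zero {a b c x : ℝ} (hc : 0 < c) (hx : x ∉ Icc (a - c⁻¹) (b + c⁻¹)) :
    smoothCutoff a b c x = 0 := by
  have hcc : c * c⁻¹ = 1 := mul_inv_cancel₀ hc.ne'
  rcases lt_or_ge x (a - c⁻¹) with hxa | hxa
  · have hleft := mul_lt_mul_of_pos_left hxa hc
    rw [smoothCutoff, smoothTransition.zero_of_nonpos (by linarith), zero_mul]
  · have hright := mul_lt_mul_of_pos_left (lt_of_not_ge fun hxb => hx ⟨hxa, hxb⟩) hc
    rw [smoothCutoff, mul_comm, smoothTransition.zero_of_nonpos (by linarith), zero_mul]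

lemma polyBoundedDerivsOn_smoothCutoff (a b : ℝ) {c : ℕ → ℝ} {K : ℝ≥0} {q : ℕ}
    (hc : ∀ n, |c n| ≤ K * ((n : ℝ) + 1) ^ q) :
    PolyBoundedDerivsOn (fun _ => univ) fun n => smoothCutoff a b (c n) := by
  have hbdd := exists_abs_iteratedDeriv_smoothTransition_le
  exact (polyBoundedDerivsOn_comp_affine smoothTransition.contDiff hbdd hc).mul
    (polyBoundedDerivsOn_comp_affine smoothTransition.contDiff hbdd
      (by simpa only [abs_neg] using hc))
    (fun n => smoothTransition.contDiff.comp (by fun_prop))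
    (fun n => smoothTransition.contDiff.comp (by fun_prop))

theorem exists_contDiff_eqOn_tsum {a b : ℝ} {c : ℕ → ℝ} {K : ℝ≥0} {q : ℕ}
    (hc_pos : ∀ n, 0 < c n) (hc : ∀ n, c n ≤ K * ((n : ℝ) + 1) ^ q) {f : ℕ → ℝ → ℝ}
    (hf : PolyBoundedDerivsOn (fun n => Icc (a - (c n)⁻¹) (b + (c n)⁻¹)) f)
    (hf_smooth : ∀ n, ContDiff ℝ (⊤ : ℕ∞) (f n)) {u : ℕ → ℝ}
    (hu : SuperpolynomialDecay atTop (fun n : ℕ => (n : ℝ)) u) :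
    ∃ g : ℝ → ℝ, ContDiff ℝ (⊤ : ℕ∞) g ∧ EqOn g (fun x => ∑' n, u n * f n x) (Icc a b) := by
  have hcut : PolyBoundedDerivsOn (fun _ => univ) fun n => smoothCutoff a b (c n) :=
    polyBoundedDerivsOn_smoothCutoff a b fun n => by simpa [abs_of_pos (hc_pos n)] using hc n
  have hcut_smooth := fun n => contDiff_smoothCutoff a b (c n)
  have hprod := ((hcut.mono fun n => subset_univ _).mul hf hcut_smooth hf_smooth).of_eq_zero
    (fun n => isClosed_Icc) fun n x hx => by
      simp only [smoothCutoff_eq_zero (hc_pos n) hx, zero_mul]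
  refine ⟨_, hprod.contDiff_tsum_smul (fun n => (hcut_smooth n).mul (hf_smooth n)) hu,
    fun x hx => tsum_congr fun n => ?_⟩
  rw [smoothCutoff_eq_one (hc_pos n).le hx, one_mul, smul_eq_mul]

/-! ### Chebyshev polynomials slightly outside `[-1, 1]` -/

lemma one_add_sq_div_two_le_cosh (t : ℝ) : 1 + t ^ 2 / 2 ≤ cosh t := by
  have hsinh : (t / 2) ^ 2 ≤ sinh (t / 2) ^ 2 :=
    sq_le_sq.2 <| abs_sinh (t / 2) ▸ self_le_sinh_iff.2 (abs_nonneg _)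
  calc 1 + t ^ 2 / 2 = 1 + 2 * (t / 2) ^ 2 := by ring
    _ ≤ 1 + 2 * sinh (t / 2) ^ 2 := by gcongr
    _ = cosh (2 * (t / 2)) := by rw [cosh_two_mul, cosh_sq]; ring
    _ = cosh t := by rw [mul_div_cancel₀ t two_ne_zero]

lemma abs_eval_T_le_cosh {x t : ℝ} (hx : |x| ≤ cosh t) (m : ℤ) :
    |(T ℝ m).eval x| ≤ cosh (m * t) := by
  rcases le_total |x| 1 with h1 | h1
  · exact (Polynomial.Chebyshev.abs_eval_T_real_le_one m h1).trans (one_le_cosh _)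
  · have habs : |(T ℝ m).eval x| = |(T ℝ m).eval (|x|)| := by
      rcases abs_choice x with h | h <;> rw [h]
      rw [Polynomial.Chebyshev.T_eval_neg, abs_mul]
      rcases Int.even_or_odd m with hm | hm <;> simp [hm]
    rw [habs, ← cosh_arcosh h1, Polynomial.Chebyshev.T_real_cosh, abs_of_pos (cosh_pos _),
      cosh_le_cosh, abs_mul, abs_mul]
    have ht : |arcosh (|x|)| ≤ |t| := by rwa [← cosh_le_cosh, cosh_arcosh h1]
    gcongr

lemma norm_map_U_le {R E : Type*} [CommRing R] [SeminormedAddCommGroup E]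
    (φ : Polynomial R →+ E) {B : ℝ} {n : ℕ} (hB : ∀ m ≤ n, ‖φ (T R (m : ℕ))‖ ≤ B) :
    ∀ m ≤ n, ‖φ (U R (m : ℕ))‖ ≤ (m + 1) * B := by
  intro m
  induction m using Nat.twoStepInduction with
  | zero => intro h; simpa using hB 0 h
  | one =>
    intro h
    have hU : U R (1 : ℕ) = T R (1 : ℕ) + T R (1 : ℕ) := by simp [two_mul]
    rw [hU, map_add]
    calc _ ≤ B + B := norm_add_le_of_le (hB 1 h) (hB 1 h)
      _ = _ := by push_cast; ring
  | more m ih _ =>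
    intro h
    have hU : U R (m + 2 : ℕ) = T R (m + 2 : ℕ) + T R (m + 2 : ℕ) + U R (m : ℕ) := by
      push_cast
      rw [Polynomial.Chebyshev.U_eq_two_mul_T_add_U, two_mul]
    rw [hU, map_add, map_add]
    calc _ ≤ B + B + (m + 1) * B :=
          norm_add_le_of_le (norm_add_le_of_le (hB _ h) (hB _ h)) (ih (by omega))
      _ = _ := by push_cast; ring

lemma abs_eval_iterate_derivative_U_le {x B : ℝ} {n k : ℕ}
    (hB : ∀ m ≤ n, |(derivative^[k] (T ℝ (m : ℕ))).eval x| ≤ B) :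
    ∀ m ≤ n, |(derivative^[k] (U ℝ (m : ℕ))).eval x| ≤ (m + 1) * B := by
  have h := norm_map_U_le ((Polynomial.leval x ∘ₗ derivative ^ k).toAddMonoidHom) (B := B) (n := n)
  simpa [Module.End.pow_apply] using h (by simpa [Module.End.pow_apply] using hB)

-- The recursion alternates `T'ₘ = m Uₘ₋₁` with the expansion of `Uₘ₋₁` in `T₀, …, Tₘ₋₁`.
lemma abs_eval_iterate_derivative_T_le {x B : ℝ} {n : ℕ}
    (hB : ∀ m ≤ n, |(T ℝ (m : ℕ)).eval x| ≤ B) (k : ℕ) :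
    ∀ m ≤ n, |(derivative^[k] (T ℝ (m : ℕ))).eval x| ≤ ((n : ℝ) ^ 2) ^ k * B := by
  have hB_nonneg : 0 ≤ B := (abs_nonneg _).trans (hB 0 n.zero_le)
  induction k with
  | zero => simpa using hB
  | succ k ih =>
    rintro (_ | m) hm
    · rw [Nat.cast_zero, Polynomial.Chebyshev.T_zero, Polynomial.iterate_derivative_one k.succ_pos,
        Polynomial.eval_zero, abs_zero]
      positivity
    have hderiv : derivative^[k + 1] (T ℝ (m + 1 : ℕ)) =
        ((m + 1 : ℕ) : Polynomial ℝ) * derivative^[k] (U ℝ (m : ℕ)) := by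
      rw [Function.iterate_succ_apply, Polynomial.Chebyshev.T_derivative_eq_U,
        ← Polynomial.iterate_derivative_natCast_mul]
      simp
    have hmn : (m : ℝ) + 1 ≤ n := mod_cast hm
    calc _ = ((m : ℝ) + 1) * |(derivative^[k] (U ℝ (m : ℕ))).eval x| := by
          rw [hderiv, Polynomial.eval_mul, Polynomial.eval_natCast, abs_mul, Nat.abs_cast,
            Nat.cast_add_one]
      _ ≤ (m + 1) * ((m + 1) * (((n : ℝ) ^ 2) ^ k * B)) := by
          gcongr
          exact abs_eval_iterate_derivative_U_le ih m (by omega)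
      _ ≤ n * (n * (((n : ℝ) ^ 2) ^ k * B)) := by gcongr
      _ = _ := by ring

lemma iteratedDeriv_polynomial_eval {𝕜 : Type*} [NontriviallyNormedField 𝕜] (p : Polynomial 𝕜)
    (k : ℕ) : iteratedDeriv k (fun x => p.eval x) = fun x => (derivative^[k] p).eval x := by
  induction k generalizing p with
  | zero => rfl
  | succ k ih =>
    have hderiv : deriv (fun x => p.eval x) = fun x => (derivative p).eval x :=
      funext fun _ => p.deriv
    rw [iteratedDeriv_succ', hderiv, ih, Function.iterate_succ_apply]

lemma contDiff_chebU (n : ℕ) {m : WithTop ℕ∞} : ContDiff ℝ m (chebU n) :=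
  (U ℝ n).contDiff_aeval m

lemma continuous_chebU (n : ℕ) : Continuous (chebU n) :=
  (U ℝ n).continuous

lemma polyBoundedDerivsOn_chebU :
    PolyBoundedDerivsOn (fun n => {x | |x| ≤ 1 + (2 * ((n : ℝ) + 1) ^ 2)⁻¹}) chebU := by
  intro k
  refine ⟨⟨cosh 1, (cosh_pos 1).le⟩, 2 * k + 1, fun n x hx => ?_⟩
  have hx_cosh : |x| ≤ cosh ((n : ℝ) + 1)⁻¹ := by
    refine (hx.trans_eq ?_).trans (one_add_sq_div_two_le_cosh _)
    rw [mul_inv, inv_pow]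
    ring
  have hT : ∀ m ≤ n, |(T ℝ (m : ℕ)).eval x| ≤ cosh 1 := fun m hm => by
    refine (abs_eval_T_le_cosh hx_cosh m).trans (cosh_le_cosh.2 ?_)
    rw [abs_one, Int.cast_natCast, abs_of_nonneg (by positivity), ← div_eq_mul_inv,
      div_le_one₀ (by positivity)]
    exact_mod_cast Nat.le_succ_of_le hm
  have hderiv : iteratedDeriv k (chebU n) x = (derivative^[k] (U ℝ n)).eval x :=
    congrFun (iteratedDeriv_polynomial_eval (U ℝ n) k) x
  calc ‖iteratedFDeriv ℝ k (chebU n) x‖ = |(derivative^[k] (U ℝ n)).eval x| := by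
        rw [norm_iteratedFDeriv_eq_norm_iteratedDeriv, norm_eq_abs, hderiv]
    _ ≤ (n + 1) * (((n : ℝ) ^ 2) ^ k * cosh 1) :=
        abs_eval_iterate_derivative_U_le (abs_eval_iterate_derivative_T_le hT k) n le_rfl
    _ ≤ (n + 1) * ((((n : ℝ) + 1) ^ 2) ^ k * cosh 1) := by gcongr; linarith
    _ = cosh 1 * ((n : ℝ) + 1) ^ (2 * k + 1) := by rw [← pow_mul]; ring

theorem exists_contDiff_eqOn_tsum_chebU {b : ℕ → ℝ}
    (hb : SuperpolynomialDecay atTop (fun n : ℕ => (n : ℝ)) b) :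
    ∃ g : ℝ → ℝ, ContDiff ℝ (⊤ : ℕ∞) g ∧
      EqOn g (fun x => ∑' n, b n * chebU n x) (Icc (-1) 1) := by
  refine exists_contDiff_eqOn_tsum (c := fun n => 2 * ((n : ℝ) + 1) ^ 2) (K := 2) (q := 2)
    (fun n => by positivity) (fun n => le_rfl)
    (polyBoundedDerivsOn_chebU.mono fun n x hx => ?_) (fun n => contDiff_chebU n) hb
  exact abs_le.2 ⟨by linarith [hx.1], hx.2⟩

/-! ### Chebyshev coefficients as sine coefficients -/

lemma setIntegral_mul_sqrt_eq_integral_cos (F : ℝ → ℝ) :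
    ∫ x in Ioo (-1 : ℝ) 1, F x * √(1 - x ^ 2) = ∫ θ in (0 : ℝ)..π, F (cos θ) * sin θ ^ 2 := by
  have h := Polynomial.Chebyshev.integral_measureT fun x => F x * (1 - x ^ 2)
  rw [Polynomial.Chebyshev.integral_measureT_eq_integral_cos,
    intervalIntegral.integral_of_le (by norm_num : (-1 : ℝ) ≤ 1),
    integral_Ioc_eq_integral_Ioo] at h
  simp only [sin_sq]
  rw [h]
  refine setIntegral_congr_fun measurableSet_Ioo fun x _ => ?_
  simp only [sqrt_inv, ← div_eq_mul_inv]
  rw [mul_div_assoc, div_sqrt]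

lemma chebU_cos_mul_sin (n : ℕ) (θ : ℝ) : chebU n (cos θ) * sin θ = sin ((n + 1) * θ) := by
  simp [chebU]

lemma fourierChebU_eq_integral_sin (g : ℝ → ℝ) (n : ℕ) :
    fourierChebU g n = (2 / π) * ∫ θ in (0 : ℝ)..π, g (cos θ) * sin θ * sin ((n + 1) * θ) := by
  rw [fourierChebU, setIntegral_mul_sqrt_eq_integral_cos fun x => g x * chebU n x]
  simp only [← chebU_cos_mul_sin, mul_mul_mul_comm _ (sin _), mul_assoc, sq]

lemma fourierChebU_congr_ae {f g : ℝ → ℝ}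
    (h : ∀ᵐ x ∂(volume.restrict (Ioo (-1 : ℝ) 1)), f x = g x) :
    fourierChebU f = fourierChebU g := by
  funext n
  refine congrArg (2 / π * ·) (integral_congr_ae ?_)
  filter_upwards [h] with x hx
  rw [hx]

lemma integral_cos_int_mul (k : ℤ) :
    ∫ θ in (0 : ℝ)..π, cos (k * θ) = if k = 0 then π else 0 := by
  split_ifs with hk
  · simp [hk]
  · simp [intervalIntegral.integral_comp_mul_left, hk]

lemma integral_sin_nat_mul_mul_sin_nat_mul (n m : ℕ) :
    ∫ θ in (0 : ℝ)..π, sin ((n + 1) * θ) * sin ((m + 1) * θ) = if n = m then π / 2 else 0 := by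
  have hprod : ∀ θ : ℝ, sin ((n + 1) * θ) * sin ((m + 1) * θ) =
      (1 / 2) * (cos (((n - m : ℤ) : ℝ) * θ) - cos (((n + m + 2 : ℤ) : ℝ) * θ)) := fun θ => by
    have hdiff : ((n - m : ℤ) : ℝ) * θ = (n + 1) * θ - (m + 1) * θ := by push_cast; ring
    have hadd : ((n + m + 2 : ℤ) : ℝ) * θ = (n + 1) * θ + (m + 1) * θ := by push_cast; ring
    rw [hdiff, hadd, cos_sub, cos_add]
    ring
  simp only [hprod]
  rw [intervalIntegral.integral_const_mul, intervalIntegral.integral_sub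
    (Continuous.intervalIntegrable (by fun_prop) _ _)
    (Continuous.intervalIntegrable (by fun_prop) _ _), integral_cos_int_mul, integral_cos_int_mul,
    if_neg (by omega : (n + m + 2 : ℤ) ≠ 0), sub_zero]
  simp only [sub_eq_zero, Nat.cast_inj]
  split_ifs <;> ring

lemma integral_tsum_mul_sin {b : ℕ → ℝ} (hb : Summable b) (m : ℕ) :
    ∫ θ in (0 : ℝ)..π, (∑' n, b n * sin ((n + 1) * θ)) * sin ((m + 1) * θ) = π / 2 * b m := by
  have hle : ∀ n θ, ‖b n * sin ((n + 1) * θ)‖ ≤ |b n| := fun n θ => by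
    rw [norm_mul]
    exact mul_le_of_le_one_right (abs_nonneg _) (abs_sin_le_one _)
  have hsum := intervalIntegral.hasSum_integral_of_dominated_convergence (μ := volume)
    (a := 0) (b := π) (F := fun n θ => b n * sin ((n + 1) * θ) * sin ((m + 1) * θ))
    (f := fun θ => (∑' n, b n * sin ((n + 1) * θ)) * sin ((m + 1) * θ)) (fun n _ => |b n|)
    (fun n => Continuous.aestronglyMeasurable (by fun_prop))
    (fun n => .of_forall fun θ _ => by
      rw [norm_mul]
      exact (mul_le_of_le_one_right (norm_nonneg _) (abs_sin_le_one _)).trans (hle n θ))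
    (.of_forall fun _ _ => hb.abs) intervalIntegrable_const
    (.of_forall fun θ _ => (Summable.of_norm_bounded hb.abs (hle · θ)).hasSum.mul_right _)
  simp only [mul_assoc, intervalIntegral.integral_const_mul, integral_sin_nat_mul_mul_sin_nat_mul,
    mul_ite, mul_zero] at hsum
  have hsingle := hsum.unique (hasSum_single m fun n hn => if_neg hn)
  simpa only [if_true, mul_comm (b m)] using hsingle

lemma fourierChebU_tsum {b : ℕ → ℝ} (hb : Summable b) :
    fourierChebU (fun x => ∑' n, b n * chebU n x) = b := by
  funext m
  have hsine : ∀ θ, (∑' n, b n * chebU n (cos θ)) * sin θ = ∑' n, b n * sin ((n + 1) * θ) :=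
    fun θ => by simp only [← tsum_mul_right, mul_assoc, chebU_cos_mul_sin]
  simp only [fourierChebU_eq_integral_sin, hsine]
  rw [integral_tsum_mul_sin hb]
  field_simp

/-! ### Coefficients of smooth functions -/

lemma exists_abs_fourierChebU_le {g : ℝ → ℝ} (hg : Continuous g) :
    ∃ M : ℝ, ∀ n, |fourierChebU g n| ≤ M := by
  obtain ⟨M, hM⟩ := (isCompact_Icc (a := (0 : ℝ)) (b := π)).exists_bound_of_continuousOn
    (f := fun θ => g (cos θ) * sin θ)
    (Continuous.continuousOn (by fun_prop))
  refine ⟨2 / π * (M * |π - 0|), fun n => ?_⟩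
  rw [fourierChebU_eq_integral_sin, abs_mul, abs_of_pos (by positivity : 0 < 2 / π)]
  gcongr
  rw [← norm_eq_abs]
  refine intervalIntegral.norm_integral_le_of_norm_le_const fun θ hθ => ?_
  rw [uIoc_of_le pi_nonneg] at hθ
  rw [norm_mul]
  exact (mul_le_of_le_one_right (norm_nonneg _) (abs_sin_le_one _)).trans
    (hM θ (Ioc_subset_Icc_self hθ))

lemma integral_sin_mul_second_deriv {h h' h'' : ℝ → ℝ}
    (hh : ∀ θ ∈ uIcc 0 π, HasDerivAt h (h' θ) θ) (hh' : ∀ θ ∈ uIcc 0 π, HasDerivAt h' (h'' θ) θ)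
    (hh'' : IntervalIntegrable h'' volume 0 π) (h_zero : h 0 = 0) (h_pi : h π = 0) (n : ℕ) :
    ∫ θ in (0 : ℝ)..π, sin ((n + 1) * θ) * h'' θ =
      -((n : ℝ) + 1) ^ 2 * ∫ θ in (0 : ℝ)..π, sin ((n + 1) * θ) * h θ := by
  have hmul : ∀ θ : ℝ, HasDerivAt (fun θ : ℝ => ((n : ℝ) + 1) * θ) (n + 1) θ := fun θ => by
    simpa using (hasDerivAt_id θ).const_mul ((n : ℝ) + 1)
  have hh'_int : IntervalIntegrable h' volume 0 π :=
    ContinuousOn.intervalIntegrable fun θ hθ => (hh' θ hθ).continuousAt.continuousWithinAt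
  have hsin_pi : sin ((n + 1) * π) = 0 := mod_cast sin_nat_mul_pi (n + 1)
  have hfirst : ∫ θ in (0 : ℝ)..π, sin ((n + 1) * θ) * h'' θ =
      -((n : ℝ) + 1) * ∫ θ in (0 : ℝ)..π, cos ((n + 1) * θ) * h' θ := by
    rw [intervalIntegral.integral_mul_deriv_eq_deriv_mul (fun θ _ => (hmul θ).sin) hh'
      (Continuous.intervalIntegrable (by fun_prop) _ _) hh'', ← intervalIntegral.integral_const_mul]
    simp only [hsin_pi, mul_zero, sin_zero, zero_mul, sub_zero, zero_sub,
      ← intervalIntegral.integral_neg]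
    exact intervalIntegral.integral_congr fun θ _ => by ring
  have hsecond : ∫ θ in (0 : ℝ)..π, cos ((n + 1) * θ) * h' θ =
      ((n : ℝ) + 1) * ∫ θ in (0 : ℝ)..π, sin ((n + 1) * θ) * h θ := by
    rw [intervalIntegral.integral_mul_deriv_eq_deriv_mul (fun θ _ => (hmul θ).cos) hh
      (Continuous.intervalIntegrable (by fun_prop) _ _) hh'_int,
      ← intervalIntegral.integral_const_mul]
    simp only [h_zero, h_pi, mul_zero, sub_zero, zero_sub, ← intervalIntegral.integral_neg]
    exact intervalIntegral.integral_congr fun θ _ => by ring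
  rw [hfirst, hsecond]
  ring

/-- The differential operator whose eigenfunctions are the `Uₙ`, with eigenvalues `1 + (n + 1)²`. -/
noncomputable def chebOp (g : ℝ → ℝ) (x : ℝ) : ℝ :=
  2 * g x - ((1 - x ^ 2) * deriv (deriv g) x - 3 * x * deriv g x)

lemma contDiff_chebOp {g : ℝ → ℝ} (hg : ContDiff ℝ (⊤ : ℕ∞) g) :
    ContDiff ℝ (⊤ : ℕ∞) (chebOp g) := by
  have hg1 := (contDiff_infty_iff_deriv.1 hg).2
  have hg2 := (contDiff_infty_iff_deriv.1 hg1).2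
  exact (contDiff_const.mul hg).sub <| ((contDiff_const.sub (contDiff_id.pow 2)).mul hg2).sub
    ((contDiff_const.mul contDiff_id).mul hg1)

lemma fourierChebU_chebOp {g : ℝ → ℝ} (hg : ContDiff ℝ (⊤ : ℕ∞) g) (n : ℕ) :
    fourierChebU (chebOp g) n = (1 + ((n : ℝ) + 1) ^ 2) * fourierChebU g n := by
  have hg1 := (contDiff_infty_iff_deriv.1 hg).2
  have hg_cont := hg.continuous
  have hop_cont := (contDiff_chebOp hg).continuous
  have hderiv : ∀ θ, HasDerivAt (fun θ => g (cos θ) * sin θ)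
      (g (cos θ) * cos θ - deriv g (cos θ) * sin θ ^ 2) θ := fun θ => by
    have hG := ((hg.differentiable (by simp)) (cos θ)).hasDerivAt.comp θ (hasDerivAt_cos θ)
    refine (hG.mul (hasDerivAt_sin θ)).congr_deriv ?_
    simp only [Function.comp]
    ring
  have hderiv2 : ∀ θ, HasDerivAt (fun θ => g (cos θ) * cos θ - deriv g (cos θ) * sin θ ^ 2)
      (g (cos θ) * sin θ - chebOp g (cos θ) * sin θ) θ := fun θ => by
    have hG := ((hg.differentiable (by simp)) (cos θ)).hasDerivAt.comp θ (hasDerivAt_cos θ)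
    have hG1 := ((hg1.differentiable (by simp)) (cos θ)).hasDerivAt.comp θ (hasDerivAt_cos θ)
    refine ((hG.mul (hasDerivAt_cos θ)).sub (hG1.mul ((hasDerivAt_sin θ).pow 2))).congr_deriv ?_
    simp only [Function.comp, Pi.pow_apply, chebOp, ← sin_sq]
    push_cast
    ring
  have hparts := integral_sin_mul_second_deriv (fun θ _ => hderiv θ) (fun θ _ => hderiv2 θ)
    (Continuous.intervalIntegrable (by fun_prop) _ _) (by simp) (by simp) n
  simp only [mul_sub] at hparts
  rw [intervalIntegral.integral_sub (Continuous.intervalIntegrable (by fun_prop) _ _)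
    (Continuous.intervalIntegrable (by fun_prop) _ _)] at hparts
  simp only [fourierChebU_eq_integral_sin, mul_comm _ (sin ((n + 1) * _))]
  linear_combination -(2 / π) * hparts

lemma fourierChebU_iterate_chebOp {g : ℝ → ℝ} (hg : ContDiff ℝ (⊤ : ℕ∞) g) (k n : ℕ) :
    fourierChebU (chebOp^[k] g) n = (1 + ((n : ℝ) + 1) ^ 2) ^ k * fourierChebU g n := by
  induction k generalizing g with
  | zero => simp
  | succ k ih =>
    rw [Function.iterate_succ_apply, ih (contDiff_chebOp hg), fourierChebU_chebOp hg]
    ring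

theorem superpolynomialDecay_fourierChebU {g : ℝ → ℝ} (hg : ContDiff ℝ (⊤ : ℕ∞) g) :
    SuperpolynomialDecay atTop (fun n : ℕ => (n : ℝ)) (fourierChebU g) := by
  rw [superpolynomialDecay_iff_abs_isBoundedUnder _ tendsto_natCast_atTop_atTop]
  intro k
  have hsmooth : ContDiff ℝ (⊤ : ℕ∞) (chebOp^[k] g) :=
    Function.Iterate.rec (ContDiff ℝ (⊤ : ℕ∞)) hg (fun _ => contDiff_chebOp) k
  obtain ⟨M, hM⟩ := exists_abs_fourierChebU_le hsmooth.continuous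
  refine isBoundedUnder_of ⟨M, fun n => ?_⟩
  have hn : (n : ℝ) ≤ 1 + ((n : ℝ) + 1) ^ 2 := by nlinarith
  calc |(n : ℝ) ^ k * fourierChebU g n| = (n : ℝ) ^ k * |fourierChebU g n| := by
        rw [abs_mul, abs_of_nonneg (by positivity)]
    _ ≤ (1 + ((n : ℝ) + 1) ^ 2) ^ k * |fourierChebU g n| := by gcongr
    _ = |fourierChebU (chebOp^[k] g) n| := by
        rw [fourierChebU_iterate_chebOp hg, abs_mul,
          abs_of_pos (by positivity : 0 < (1 + ((n : ℝ) + 1) ^ 2) ^ k)]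
    _ ≤ M := hM n

/-! ### Completeness -/

section Completeness

variable {μ : Measure ℝ} {s : Set ℝ} {a b : ℝ} {φ : ℝ → ℝ}

lemma integral_continuousOn_mul_eq_zero_of_polynomial (hs : MeasurableSet s) (hsub : s ⊆ Icc a b)
    (hφ : IntegrableOn φ s μ) (h : ∀ p : Polynomial ℝ, ∫ x in s, p.eval x * φ x ∂μ = 0)
    {g : ℝ → ℝ} (hg : ContinuousOn g (Icc a b)) : ∫ x in s, g x * φ x ∂μ = 0 := by
  have hle : ∀ ε > 0, |∫ x in s, g x * φ x ∂μ| ≤ ε * ∫ x in s, |φ x| ∂μ := fun ε hε => by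
    obtain ⟨p, hp⟩ := exists_polynomial_near_of_continuousOn a b g hg ε hε
    have hdiff : ∫ x in s, g x * φ x ∂μ = ∫ x in s, (g x * φ x - p.eval x * φ x) ∂μ := by
      rw [integral_sub (hφ.continuousOn_mul_of_subset hg isCompact_Icc hs hsub)
        (hφ.continuousOn_mul_of_subset p.continuousOn isCompact_Icc hs hsub), h, sub_zero]
    rw [hdiff, ← integral_const_mul, ← norm_eq_abs]
    refine norm_integral_le_of_norm_le (hφ.abs.const_mul ε) ?_
    filter_upwards [ae_restrict_mem hs] with x hx
    rw [← sub_mul, norm_mul, norm_eq_abs, norm_eq_abs, abs_sub_comm]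
    gcongr
    exact (hp x (hsub hx)).le
  have hlim : Tendsto (fun ε => ε * ∫ x in s, |φ x| ∂μ) (𝓝[>] 0) (𝓝 0) :=
    ((continuous_mul_const _).tendsto' 0 0 (zero_mul _)).mono_left nhdsWithin_le_nhds
  exact abs_nonpos_iff.1 (ge_of_tendsto hlim (eventually_mem_nhdsWithin.mono hle))

lemma ae_eq_zero_of_integral_polynomial_mul_eq_zero (hs : MeasurableSet s) (hsub : s ⊆ Icc a b)
    (hφ : IntegrableOn φ s μ) (h : ∀ p : Polynomial ℝ, ∫ x in s, p.eval x * φ x ∂μ = 0) :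
    ∀ᵐ x ∂μ.restrict s, φ x = 0 :=
  ae_eq_zero_of_integral_contDiff_smul_eq_zero hφ.integrable.locallyIntegrable fun _ hg _ =>
    integral_continuousOn_mul_eq_zero_of_polynomial hs hsub hφ h hg.continuous.continuousOn

end Completeness

lemma span_range_U {R : Type*} [Field R] [NeZero (2 : R)] :
    Submodule.span R (range fun n : ℕ => U R n) = ⊤ :=
  Polynomial.Sequence.span ⟨fun n => U R n, Polynomial.Chebyshev.degree_U_natCast R⟩ fun n =>
    (Polynomial.Chebyshev.leadingCoeff_U_natCast R n).symm ▸ (two_ne_zero.isUnit.pow n)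

lemma integral_polynomial_mul_eq_zero_of_chebU {μ : Measure ℝ} {φ : ℝ → ℝ}
    (hφ : ∀ p : Polynomial ℝ, Integrable (fun x => p.eval x * φ x) μ)
    (h : ∀ n, ∫ x, chebU n x * φ x ∂μ = 0) (p : Polynomial ℝ) : ∫ x, p.eval x * φ x ∂μ = 0 := by
  have hp : p ∈ Submodule.span ℝ (range fun n : ℕ => U ℝ n) :=
    span_range_U (R := ℝ) ▸ Submodule.mem_top
  induction hp using Submodule.span_induction with
  | mem _ hmem =>
    obtain ⟨n, rfl⟩ := hmem
    exact h n
  | zero => simp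
  | add p q _ _ hp hq =>
    simp only [Polynomial.eval_add, add_mul]
    rw [integral_add (hφ p) (hφ q), hp, hq, add_zero]
  | smul c p _ hp =>
    simp only [Polynomial.eval_smul, smul_eq_mul, mul_assoc, integral_const_mul, hp, mul_zero]

theorem ae_eq_of_fourierChebU_eq {f g : ℝ → ℝ}
    (hf : IntegrableOn (fun x => f x * √(1 - x ^ 2)) (Ioo (-1) 1))
    (hg : IntegrableOn (fun x => g x * √(1 - x ^ 2)) (Ioo (-1) 1))
    (h : fourierChebU f = fourierChebU g) :
    ∀ᵐ x ∂(volume.restrict (Ioo (-1 : ℝ) 1)), f x = g x := by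
  have hint : ∀ {φ u : ℝ → ℝ}, IntegrableOn φ (Ioo (-1) 1) → Continuous u →
      IntegrableOn (fun x => u x * φ x) (Ioo (-1) 1) := fun hφ hu =>
    hφ.continuousOn_mul_of_subset hu.continuousOn isCompact_Icc measurableSet_Ioo
      Ioo_subset_Icc_self
  have hcoef : ∀ n, ∫ x in Ioo (-1 : ℝ) 1,
      chebU n x * (f x * √(1 - x ^ 2) - g x * √(1 - x ^ 2)) = 0 := fun n => by
    have hn := mul_left_cancel₀ (by positivity : (2 / π : ℝ) ≠ 0) (congrFun h n)
    simp only [mul_comm _ (chebU n _), mul_assoc] at hn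
    simp only [mul_sub]
    rw [integral_sub (hint hf (continuous_chebU n)) (hint hg (continuous_chebU n)), hn, sub_self]
  have hzero := ae_eq_zero_of_integral_polynomial_mul_eq_zero measurableSet_Ioo Ioo_subset_Icc_self
    (hf.sub hg) <| integral_polynomial_mul_eq_zero_of_chebU
      (fun p => hint (hf.sub hg) p.continuous) hcoef
  filter_upwards [hzero, ae_restrict_mem measurableSet_Ioo] with x hx hx_mem
  have hweight : √(1 - x ^ 2) ≠ 0 := (sqrt_pos.2 (by nlinarith [hx_mem.1, hx_mem.2])).ne'
  exact mul_right_cancel₀ hweight (sub_eq_zero.1 hx)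

lemma integrableOn_mul_sqrt_of_sq {f : ℝ → ℝ} (hmeas : Measurable f)
    (hL2 : IntegrableOn (fun x => f x ^ 2 * √(1 - x ^ 2)) (Ioo (-1) 1)) :
    IntegrableOn (fun x => f x * √(1 - x ^ 2)) (Ioo (-1) 1) := by
  have hweight : IntegrableOn (fun x : ℝ => √(1 - x ^ 2)) (Ioo (-1) 1) :=
    (Continuous.integrableOn_Icc (by fun_prop)).mono_set Ioo_subset_Icc_self
  refine (hL2.add hweight).mono' (by fun_prop) (.of_forall fun x => ?_)
  have habs : |f x| ≤ f x ^ 2 + 1 := by nlinarith [sq_abs (f x), sq_nonneg (|f x| - 1)]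
  calc ‖f x * √(1 - x ^ 2)‖ = |f x| * √(1 - x ^ 2) := by
        rw [norm_mul, norm_of_nonneg (sqrt_nonneg _), norm_eq_abs]
    _ ≤ (f x ^ 2 + 1) * √(1 - x ^ 2) := by gcongr
    _ = f x ^ 2 * √(1 - x ^ 2) + √(1 - x ^ 2) := by ring

theorem Uinfty_eq_Cinfty_general (f : ℝ → ℝ)
    (hf : IntegrableOn (fun x => f x * √(1 - x ^ 2)) (Ioo (-1 : ℝ) 1)) :
    (∀ s : ℕ, Summable (fun n : ℕ => (1 + ((n : ℝ) + 1) ^ 2) ^ s * fourierChebU f n ^ 2)) ↔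
    (∃ g : ℝ → ℝ, ContDiff ℝ (⊤ : ℕ∞) g ∧
      ∀ᵐ x ∂(volume.restrict (Ioo (-1 : ℝ) 1)), f x = g x) := by
  rw [← superpolynomialDecay_iff_forall_summable]
  constructor
  · intro hb
    obtain ⟨g, hg, hg_series⟩ := exists_contDiff_eqOn_tsum_chebU hb
    have hg_cont := hg.continuous
    have hcoef : fourierChebU g = fourierChebU f := by
      rw [fourierChebU_congr_ae (ae_restrict_of_forall_mem measurableSet_Ioo fun x hx =>
        hg_series (Ioo_subset_Icc_self hx)),
        fourierChebU_tsum (summable_of_superpolynomialDecay hb)]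
    have hg_int : IntegrableOn (fun x => g x * √(1 - x ^ 2)) (Ioo (-1) 1) :=
      (Continuous.integrableOn_Icc (by fun_prop)).mono_set Ioo_subset_Icc_self
    exact ⟨g, hg, ae_eq_of_fourierChebU_eq hf hg_int hcoef.symm⟩
  · rintro ⟨g, hg, hfg⟩
    exact fourierChebU_congr_ae hfg ▸ superpolynomialDecay_fourierChebU hg

/-- `U^∞ = C^∞([-1,1])`: a function in `L²_ω` has rapidly decaying second-kind
Chebyshev coefficients iff it coincides a.e. on `(-1,1)` with a smooth function
on `ℝ`. -/
theorem Uinfty_eq_Cinfty (f : ℝ → ℝ) (hmeas : Measurable f)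
    (hL2 : IntegrableOn (fun x => f x ^ 2 * Real.sqrt (1 - x ^ 2)) (Ioo (-1 : ℝ) 1)) :
    (∀ s : ℕ, Summable (fun n : ℕ => (1 + ((n : ℝ) + 1) ^ 2) ^ s * fourierChebU f n ^ 2)) ↔
    (∃ g : ℝ → ℝ, ContDiff ℝ (⊤ : ℕ∞) g ∧
      ∀ᵐ x ∂(volume.restrict (Ioo (-1 : ℝ) 1)), f x = g x) :=
  Uinfty_eq_Cinfty_general f (integrableOn_mul_sqrt_of_sq hmeas hL2)
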